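/- Let c > 0 and α ∈ (0,1), set q_n = 1 − c/n^α, and let (M_n) be a sequence of integers with 0 ≤ M_n ≤ n−1 such that lim_{n→∞} (n − M_n)/n^α = ∞. Then lim_{n→∞} 𝒫_n^{q_n}(S(n,M_n)) = 0. -/

import Mathlib

open Finset Filter

/-- The number of inversions of a permutation of `Fin n`. -/
def invCount (n : ℕ) (σ : Equiv.Perm (Fin n)) : ℕ :=
  (Finset.univ.filter (fun p : Fin n × Fin n => p.1 < p.2 ∧ σ p.2 < σ p.1)).card

/-- Normalization constant of the Mallows distribution:
`Z_n(q) = ∑_{σ ∈ S_n} q^{inv σ}`. -/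
noncomputable def mallowsZ (n : ℕ) (q : ℝ) : ℝ :=
  ∑ σ : Equiv.Perm (Fin n), q ^ invCount n σ

/-- The Mallows probability of a set `A` of permutations:
`P_n^q(A) = (∑_{σ ∈ A} q^{inv σ}) / Z_n(q)`. -/
noncomputable def mallowsProb (n : ℕ) (q : ℝ) (A : Finset (Equiv.Perm (Fin n))) : ℝ :=
  (∑ σ ∈ A, q ^ invCount n σ) / mallowsZ n q

/-- The success event for the strategy `S(n,M)`.  Positions are indexed by `Fin n`
(the index `i : Fin n` represents the `(i+1)`-st arriving item) and ranks are the
values of `σ` (the value `n-1`, i.e. the top of `Fin n`, represents the highest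
rank `n`).  For `M ≥ 1` the strategy succeeds iff for some position `j` with
`(j:ℕ) ≥ M` (i.e. item number `j+1 ≥ M+1`) the item at position `j` has the top
rank and the maximum rank among the items strictly before position `j` equals the
maximum rank among the first `M` items.  For `M = 0` it succeeds iff the first
item has top rank. -/
def winEvent (n M : ℕ) : Finset (Equiv.Perm (Fin n)) :=
  if M = 0 then
    Finset.univ.filter (fun σ => ∀ i : Fin n, (i : ℕ) = 0 → (σ i : ℕ) = n - 1)
  else
    Finset.univ.filter (fun σ => ∃ j : Fin n, M ≤ (j : ℕ) ∧ (σ j : ℕ) = n - 1 ∧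
      (Finset.univ.filter (fun i : Fin n => i < j)).sup (fun i => (σ i : ℕ)) =
      (Finset.univ.filter (fun i : Fin n => (i : ℕ) < M)).sup (fun i => (σ i : ℕ)))

/-- `𝒫_n^q(S(n,M))`, the success probability of the strategy `S(n,M)` under the
Mallows distribution with parameter `q`. -/
noncomputable def succProb (n M : ℕ) (q : ℝ) : ℝ := mallowsProb n q (winEvent n M)

/-! Build a permutation of `n + 1` items from one of `n` items by choosing the relative rank of the
last arrival: relative rank `v` (counted from `0`) creates `n - v` new inversions, so under the
Mallows distribution the last arrival is a record with probability `1 / [n + 1]_q`, independently of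
the past, where `[n]_q = 1 + q + ⋯ + q ^ (n - 1)`. Hence `k` given arrivals contain no record with
probability at most `q ^ k`. The strategy succeeds iff there is exactly one record among the last
`k = n - M` arrivals, and summing over the arrival at which it occurs gives
`[n]_q * 𝒫 ≤ k * q ^ (k - 1)`. With `y = k * (1 - q)` this yields
`𝒫 ≤ e * (y * exp (-y)) / (1 - exp (-y))`, which vanishes as `y → ∞`. -/

section InsertLast

variable {n : ℕ}

/-- The permutation of `n + 1` items whose last value is `v` and whose other values are in the same
relative order as in `τ`. -/
def insertLast (v : Fin (n + 1)) (τ : Equiv.Perm (Fin n)) : Equiv.Perm (Fin (n + 1)) :=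
  (finSuccEquivLast.trans (Equiv.optionCongr τ)).trans (finSuccEquiv' v).symm

@[simp]
lemma insertLast_castSucc (v : Fin (n + 1)) (τ : Equiv.Perm (Fin n)) (i : Fin n) :
    insertLast v τ i.castSucc = v.succAbove (τ i) := by
  simp [insertLast]

@[simp]
lemma insertLast_last (v : Fin (n + 1)) (τ : Equiv.Perm (Fin n)) :
    insertLast v τ (Fin.last n) = v := by
  simp [insertLast]

lemma insertLast_bijective (n : ℕ) : Function.Bijective
    fun p : Fin (n + 1) × Equiv.Perm (Fin n) => insertLast p.1 p.2 := by
  rw [Fintype.bijective_iff_injective_and_card]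
  refine ⟨?_, by simp [Fintype.card_perm, Nat.factorial_succ]⟩
  rintro ⟨v, τ⟩ ⟨w, ρ⟩ (h : insertLast v τ = insertLast w ρ)
  obtain rfl : v = w := by simpa using DFunLike.congr_fun h (Fin.last n)
  suffices τ = ρ by rw [this]
  ext1 i
  simpa using DFunLike.congr_fun h i.castSucc

lemma sum_perm_fin_succ {R : Type*} [AddCommMonoid R] (f : Equiv.Perm (Fin (n + 1)) → R) :
    ∑ σ, f σ = ∑ v : Fin (n + 1), ∑ τ : Equiv.Perm (Fin n), f (insertLast v τ) := by
  rw [← Fintype.sum_prod_type']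
  exact ((insertLast_bijective n).sum_comp f).symm

lemma insertLast_castSucc_le_castSucc {v : Fin (n + 1)} {τ : Equiv.Perm (Fin n)} {i j : Fin n} :
    insertLast v τ i.castSucc ≤ insertLast v τ j.castSucc ↔ τ i ≤ τ j := by
  simp [(Fin.strictMono_succAbove v).le_iff_le]

lemma exists_insertLast_last_le_castSucc (v : Fin n) (τ : Equiv.Perm (Fin n)) :
    ∃ i : Fin n, insertLast v.castSucc τ (Fin.last n) ≤ insertLast v.castSucc τ i.castSucc := by
  refine ⟨τ.symm v, ?_⟩
  rw [insertLast_last, insertLast_castSucc, Equiv.apply_symm_apply, Fin.succAbove_castSucc_self]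
  exact Fin.castSucc_le_succ v

end InsertLast

section Inversions

lemma invCount_eq_sum (n : ℕ) (σ : Equiv.Perm (Fin n)) :
    invCount n σ = ∑ j : Fin n, ∑ i : Fin n, if i < j ∧ σ j < σ i then 1 else 0 := by
  rw [invCount, card_filter, Fintype.sum_prod_type_right]

lemma card_lt_succAbove {n : ℕ} (v : Fin (n + 1)) : #{w | v < v.succAbove w} = n - (v : ℕ) := by
  simp only [Fin.lt_succAbove_iff_le_castSucc, Fin.le_def, Fin.val_castSucc]
  rw [card_filter, Fin.sum_univ_eq_sum_range (fun w => if (v : ℕ) ≤ w then 1 else 0),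
    ← card_filter, ← Nat.card_Ico]
  congr 1
  ext w
  simp [and_comm]

lemma invCount_insertLast {n : ℕ} (v : Fin (n + 1)) (τ : Equiv.Perm (Fin n)) :
    invCount (n + 1) (insertLast v τ) = invCount n τ + (n - (v : ℕ)) := by
  have new_inversions : (∑ i, if v < v.succAbove (τ i) then 1 else 0) = n - (v : ℕ) := by
    rw [Equiv.sum_comp τ fun w => if v < v.succAbove w then 1 else 0, ← card_filter,
      card_lt_succAbove]
  rw [← new_inversions, invCount_eq_sum, invCount_eq_sum, Fin.sum_univ_castSucc]
  simp only [Fin.sum_univ_castSucc, insertLast_castSucc, insertLast_last,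
    (Fin.strictMono_succAbove v).lt_iff_lt, Fin.castSucc_lt_castSucc_iff, Fin.castSucc_lt_last,
    (Fin.le_last _).not_gt, lt_irrefl, true_and, false_and, if_false, add_zero]

end Inversions

section MallowsRecursion

lemma sum_fin_pow_sub {R : Type*} [CommSemiring R] (q : R) (n : ℕ) :
    ∑ v : Fin n, q ^ (n - (v : ℕ)) = q * ∑ i ∈ range n, q ^ i := by
  rw [← Equiv.sum_comp Fin.revPerm, mul_sum, ← Fin.sum_univ_eq_sum_range (fun i => q * q ^ i)]
  refine sum_congr rfl fun i _ => ?_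
  rw [Fin.revPerm_apply, Fin.val_rev, ← pow_succ', Nat.sub_sub_self i.isLt]

lemma sum_pow_invCount_succ {R : Type*} [CommSemiring R] (q : R) {n : ℕ}
    {A : Finset (Equiv.Perm (Fin (n + 1)))} {B C : Finset (Equiv.Perm (Fin n))}
    (hB : ∀ τ, insertLast (Fin.last n) τ ∈ A ↔ τ ∈ B)
    (hC : ∀ (v : Fin n) τ, insertLast v.castSucc τ ∈ A ↔ τ ∈ C) :
    ∑ σ ∈ A, q ^ invCount (n + 1) σ =
      ∑ τ ∈ B, q ^ invCount n τ + (q * ∑ i ∈ range n, q ^ i) * ∑ τ ∈ C, q ^ invCount n τ := by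
  rw [← Fintype.sum_ite_mem A, ← Fintype.sum_ite_mem B, ← Fintype.sum_ite_mem C,
    sum_perm_fin_succ, Fin.sum_univ_castSucc, add_comm, ← sum_fin_pow_sub, sum_mul]
  simp only [hB, hC, invCount_insertLast, Fin.val_last, Fin.val_castSucc, Nat.sub_self, add_zero,
    pow_add, mul_sum, mul_ite, mul_zero, mul_comm]

lemma mallowsZ_succ (n : ℕ) (q : ℝ) :
    mallowsZ (n + 1) q = (∑ i ∈ range (n + 1), q ^ i) * mallowsZ n q := by
  rw [mallowsZ, sum_pow_invCount_succ (B := univ) (C := univ) q (by simp) (by simp),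
    geom_sum_succ, mallowsZ]
  ring

variable {n : ℕ} {q : ℝ}

lemma mallowsZ_pos (n : ℕ) (hq : 0 < q) : 0 < mallowsZ n q :=
  sum_pos (fun _ _ => by positivity) univ_nonempty

lemma mallowsProb_nonneg (hq : 0 < q) (A : Finset (Equiv.Perm (Fin n))) :
    0 ≤ mallowsProb n q A :=
  div_nonneg (sum_nonneg fun _ _ => by positivity) (mallowsZ_pos n hq).le

lemma mallowsProb_le_one (hq : 0 < q) (A : Finset (Equiv.Perm (Fin n))) :
    mallowsProb n q A ≤ 1 :=
  div_le_one_of_le₀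
    (sum_le_sum_of_subset_of_nonneg (subset_univ A) fun _ _ _ => by positivity)
    (mallowsZ_pos n hq).le

lemma geom_sum_mul_mallowsProb_succ (hq : 0 < q) {A : Finset (Equiv.Perm (Fin (n + 1)))}
    {B C : Finset (Equiv.Perm (Fin n))}
    (hB : ∀ τ, insertLast (Fin.last n) τ ∈ A ↔ τ ∈ B)
    (hC : ∀ (v : Fin n) τ, insertLast v.castSucc τ ∈ A ↔ τ ∈ C) :
    (∑ i ∈ range (n + 1), q ^ i) * mallowsProb (n + 1) q A =
      mallowsProb n q B + q * ((∑ i ∈ range n, q ^ i) * mallowsProb n q C) := by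
  have hZ := (mallowsZ_pos n hq).ne'
  have hgeom := (geom_sum_pos hq.le n.succ_ne_zero).ne'
  rw [mallowsProb, mallowsProb, mallowsProb, mallowsZ_succ, sum_pow_invCount_succ q hB hC]
  field_simp

end MallowsRecursion

section Events

variable {n M : ℕ}

/-- The item arriving at position `i` does not beat all of the first `M` items; for `i` beyond
the first `M` positions, the strategy `S(n, M)` does not select it. -/
def DominatedByPrefix (M : ℕ) (σ : Equiv.Perm (Fin n)) (i : Fin n) : Prop :=
  ∃ l : Fin n, (l : ℕ) < M ∧ σ i ≤ σ l

lemma dominatedByPrefix_insertLast_castSucc (hM : M ≤ n) {v : Fin (n + 1)}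
    {τ : Equiv.Perm (Fin n)} {i : Fin n} :
    DominatedByPrefix M (insertLast v τ) i.castSucc ↔ DominatedByPrefix M τ i := by
  simp only [DominatedByPrefix, Fin.exists_fin_succ', insertLast_castSucc_le_castSucc,
    Fin.val_castSucc, Fin.val_last, hM.not_gt, false_and, or_false]

lemma not_dominatedByPrefix_insertLast_last (hM : M ≤ n) (τ : Equiv.Perm (Fin n)) :
    ¬ DominatedByPrefix M (insertLast (Fin.last n) τ) (Fin.last n) := by
  simp [DominatedByPrefix, Fin.exists_fin_succ', hM.not_gt, Fin.last_le_iff]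

open Classical in
/-- The event that `S(n, M)` selects no item. It is stated without naming a best item, so that it
is the sure event for `n = M = 0`, where the recursion on `n` may start. -/
noncomputable def noSelectionEvent (n M : ℕ) : Finset (Equiv.Perm (Fin n)) :=
  {σ | ∀ i, DominatedByPrefix M σ i}

lemma mem_noSelectionEvent {σ : Equiv.Perm (Fin n)} :
    σ ∈ noSelectionEvent n M ↔ ∀ i, DominatedByPrefix M σ i := by
  simp [noSelectionEvent]

lemma insertLast_last_notMem_noSelectionEvent (hM : M ≤ n) (τ : Equiv.Perm (Fin n)) :
    insertLast (Fin.last n) τ ∉ noSelectionEvent (n + 1) M := fun h =>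
  not_dominatedByPrefix_insertLast_last hM τ (mem_noSelectionEvent.1 h _)

lemma insertLast_castSucc_mem_noSelectionEvent (hM : M ≤ n) (v : Fin n) (τ : Equiv.Perm (Fin n)) :
    insertLast v.castSucc τ ∈ noSelectionEvent (n + 1) M ↔ τ ∈ noSelectionEvent n M := by
  simp only [mem_noSelectionEvent, Fin.forall_fin_succ', dominatedByPrefix_insertLast_castSucc hM,
    and_iff_left_iff_imp]
  intro h
  obtain ⟨i, hi⟩ := exists_insertLast_last_le_castSucc v τ
  obtain ⟨l, hlM, hl⟩ := (dominatedByPrefix_insertLast_castSucc hM).2 (h i)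
  exact ⟨l, hlM, hi.trans hl⟩

lemma val_apply_eq_sub_one_iff {σ : Equiv.Perm (Fin n)} {j : Fin n} :
    (σ j : ℕ) = n - 1 ↔ ∀ i, σ i ≤ σ j := by
  rw [σ.forall_congr_left (p := fun i => σ i ≤ σ j)]
  simp only [Equiv.apply_symm_apply, Fin.le_def]
  refine ⟨fun h i => by omega, fun h => ?_⟩
  have := h ⟨n - 1, by have := j.isLt; omega⟩
  simp only at this
  omega

lemma sup_filter_lt_eq_sup_prefix_iff (hM : 0 < M) {σ : Equiv.Perm (Fin n)} {j : Fin n}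
    (hj : M ≤ (j : ℕ)) :
    ({i | i < j} : Finset (Fin n)).sup (fun i => (σ i : ℕ)) =
        ({i | (i : ℕ) < M} : Finset (Fin n)).sup (fun i => (σ i : ℕ)) ↔
      ∀ i < j, DominatedByPrefix M σ i := by
  have prefix_nonempty : ({i | (i : ℕ) < M} : Finset (Fin n)).Nonempty :=
    ⟨⟨0, j.pos⟩, by simpa using hM⟩
  have prefix_subset : ({i | (i : ℕ) < M} : Finset (Fin n)) ⊆ ({i | i < j} : Finset (Fin n)) :=
    monotone_filter_right _ fun i _ hi => Fin.lt_def.2 (lt_of_lt_of_le hi hj)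
  rw [le_antisymm_iff, and_iff_left (sup_mono prefix_subset), Finset.sup_le_iff,
    ← sup'_eq_sup prefix_nonempty]
  simp [DominatedByPrefix]

lemma mem_winEvent (hn : 0 < n) {σ : Equiv.Perm (Fin n)} :
    σ ∈ winEvent n M ↔ ∃ j : Fin n, M ≤ (j : ℕ) ∧ (∀ i, σ i ≤ σ j) ∧
      ∀ i < j, DominatedByPrefix M σ i := by
  unfold winEvent
  split_ifs with hM
  · subst hM
    have first_of_none_before : ∀ j : Fin n, (∀ i < j, DominatedByPrefix 0 σ i) ↔ (j : ℕ) = 0 := by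
      intro j
      refine ⟨fun h => ?_, fun hj i hi => absurd hi (by simp [Fin.lt_def, hj])⟩
      by_contra hj
      obtain ⟨l, hl, -⟩ := h ⟨0, hn⟩ (Fin.lt_def.2 (Nat.pos_of_ne_zero hj))
      exact Nat.not_lt_zero _ hl
    simp only [mem_filter_univ, val_apply_eq_sub_one_iff, first_of_none_before, Nat.zero_le,
      true_and]
    refine ⟨fun h => ⟨⟨0, hn⟩, h _ rfl, rfl⟩, ?_⟩
    rintro ⟨j, hmax, hj⟩ i hi
    rwa [Fin.ext (hi.trans hj.symm)]
  · simp only [mem_filter_univ, val_apply_eq_sub_one_iff]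
    refine exists_congr fun j => and_congr_right fun hj => and_congr_right fun _ => ?_
    exact sup_filter_lt_eq_sup_prefix_iff (Nat.pos_of_ne_zero hM) hj

lemma insertLast_last_mem_winEvent (hM : M ≤ n) (τ : Equiv.Perm (Fin n)) :
    insertLast (Fin.last n) τ ∈ winEvent (n + 1) M ↔ τ ∈ noSelectionEvent n M := by
  have not_max_castSucc (j : Fin n) :
      ¬ insertLast (Fin.last n) τ (Fin.last n) ≤ insertLast (Fin.last n) τ j.castSucc := by
    simp [Fin.last_le_iff]
  simp only [mem_winEvent n.succ_pos, mem_noSelectionEvent, Fin.exists_fin_succ',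
    Fin.forall_fin_succ', not_max_castSucc, dominatedByPrefix_insertLast_castSucc hM]
  simp [hM, Fin.le_last, Fin.castSucc_lt_last]

lemma insertLast_castSucc_mem_winEvent (hM : M ≤ n) (v : Fin n) (τ : Equiv.Perm (Fin n)) :
    insertLast v.castSucc τ ∈ winEvent (n + 1) M ↔ τ ∈ winEvent n M := by
  obtain ⟨i, hi⟩ := exists_insertLast_last_le_castSucc v τ
  have last_not_max : ¬ insertLast v.castSucc τ i.castSucc ≤ insertLast v.castSucc τ (Fin.last n) :=
    fun h => (Fin.castSucc_lt_last i).ne ((insertLast v.castSucc τ).injective (h.antisymm hi))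
  have max_castSucc_iff (j : Fin n) :
      (∀ k, insertLast v.castSucc τ k ≤ insertLast v.castSucc τ j.castSucc) ↔
        ∀ k, τ k ≤ τ j := by
    simp only [Fin.forall_fin_succ', insertLast_castSucc_le_castSucc, and_iff_left_iff_imp]
    exact fun h => hi.trans (insertLast_castSucc_le_castSucc.2 (h i))
  rw [mem_winEvent n.succ_pos, mem_winEvent v.pos, Fin.exists_fin_succ', or_iff_left]
  · simp only [max_castSucc_iff, Fin.forall_fin_succ', dominatedByPrefix_insertLast_castSucc hM,
      Fin.castSucc_lt_castSucc_iff, (Fin.le_last _).not_gt, false_imp_iff, and_true,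
      Fin.val_castSucc]
  · exact fun h => last_not_max (h.2.1 _)

lemma winEvent_self (hM : M ≠ 0) : winEvent M M = ∅ := by
  simp only [winEvent, hM, if_false, filter_eq_empty_iff]
  rintro σ - ⟨j, hj, -⟩
  exact j.isLt.not_ge hj

end Events

section SuccessProbability

variable {q : ℝ} {n M : ℕ}

lemma mallowsProb_noSelectionEvent_le (hq : 0 < q) (M k : ℕ) :
    mallowsProb (M + k) q (noSelectionEvent (M + k) M) ≤ q ^ k := by
  induction k with
  | zero => simpa using mallowsProb_le_one hq _
  | succ k ih =>
    have hM : M ≤ M + k := Nat.le_add_right M k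
    have recursion := geom_sum_mul_mallowsProb_succ (B := ∅) hq
      (by simp [insertLast_last_notMem_noSelectionEvent hM])
      (insertLast_castSucc_mem_noSelectionEvent hM)
    have geom_sum_le : ∑ i ∈ range (M + k), q ^ i ≤ ∑ i ∈ range (M + k + 1), q ^ i :=
      sum_le_sum_of_subset_of_nonneg (range_mono (M + k).le_succ) fun _ _ _ => by positivity
    refine le_of_mul_le_mul_left ?_ (geom_sum_pos hq.le (M + k).succ_ne_zero)
    calc (∑ i ∈ range (M + k + 1), q ^ i) *
            mallowsProb (M + k + 1) q (noSelectionEvent (M + k + 1) M)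
      _ = q * ((∑ i ∈ range (M + k), q ^ i) *
            mallowsProb (M + k) q (noSelectionEvent (M + k) M)) := by
          rw [recursion, mallowsProb, sum_empty, zero_div, zero_add]
      _ ≤ q * ((∑ i ∈ range (M + k + 1), q ^ i) * q ^ k) := by
          gcongr
          exact mallowsProb_nonneg hq _
      _ = (∑ i ∈ range (M + k + 1), q ^ i) * q ^ (k + 1) := by ring

lemma geom_sum_mul_succProb_le (hq : 0 < q) (M k : ℕ) :
    (∑ i ∈ range (M + k), q ^ i) * succProb (M + k) M q ≤ k * q ^ (k - 1) := by
  induction k with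
  | zero =>
    rcases eq_or_ne M 0 with rfl | hM
    · simp
    · simp [succProb, mallowsProb, winEvent_self hM]
  | succ k ih =>
    have hM : M ≤ M + k := Nat.le_add_right M k
    calc (∑ i ∈ range (M + k + 1), q ^ i) * succProb (M + k + 1) M q
      _ = mallowsProb (M + k) q (noSelectionEvent (M + k) M) +
            q * ((∑ i ∈ range (M + k), q ^ i) * succProb (M + k) M q) :=
          geom_sum_mul_mallowsProb_succ hq (insertLast_last_mem_winEvent hM)
            (insertLast_castSucc_mem_winEvent hM)
      _ ≤ q ^ k + q * (k * q ^ (k - 1)) := by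
          gcongr
          exact mallowsProb_noSelectionEvent_le hq M k
      _ = (k + 1 : ℕ) * q ^ (k + 1 - 1) := by
          rcases k with _ | k
          · simp
          · push_cast
            ring

lemma succProb_mul_one_sub_pow_le (hMn : M ≤ n) (hq : q ∈ Set.Ioo 0 1) :
    succProb n M q * (1 - q ^ n) ≤ ((n : ℝ) - M) * (1 - q) * q ^ (n - M - 1) := by
  obtain ⟨k, rfl⟩ := Nat.exists_eq_add_of_le hMn
  calc succProb (M + k) M q * (1 - q ^ (M + k))
    _ = (∑ i ∈ range (M + k), q ^ i) * succProb (M + k) M q * (1 - q) := by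
        rw [← geom_sum_mul_neg]
        ring
    _ ≤ k * q ^ (k - 1) * (1 - q) :=
        mul_le_mul_of_nonneg_right (geom_sum_mul_succProb_le hq.1 M k) (sub_nonneg.2 hq.2.le)
    _ = (((M + k : ℕ) : ℝ) - M) * (1 - q) * q ^ (M + k - M - 1) := by
        rw [Nat.add_sub_cancel_left]
        push_cast
        ring

lemma pow_le_exp_neg_mul_one_sub (hq : 0 ≤ q) (k : ℕ) : q ^ k ≤ Real.exp (-(k * (1 - q))) := by
  calc q ^ k ≤ Real.exp (-(1 - q)) ^ k := by
        gcongr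
        simpa using Real.one_sub_le_exp_neg (1 - q)
    _ = Real.exp (-(k * (1 - q))) := by rw [← Real.exp_nat_mul, mul_neg]

lemma succProb_le (hMn : M < n) (hq : q ∈ Set.Ioo 0 1) {y : ℝ}
    (hy : ((n : ℝ) - M) * (1 - q) = y) :
    succProb n M q ≤ Real.exp 1 * (y * Real.exp (-y)) / (1 - Real.exp (-y)) := by
  have cast_sub : ((n - M : ℕ) : ℝ) = n - M := Nat.cast_sub hMn.le
  have hy_pos : 0 < y :=
    hy ▸ mul_pos (sub_pos.2 (Nat.cast_lt.2 hMn)) (sub_pos.2 hq.2)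
  have pow_n_le : q ^ n ≤ Real.exp (-y) :=
    calc q ^ n ≤ q ^ (n - M) := pow_le_pow_of_le_one hq.1.le hq.2.le (Nat.sub_le n M)
      _ ≤ Real.exp (-y) := by
        simpa only [cast_sub, hy] using pow_le_exp_neg_mul_one_sub hq.1.le (n - M)
  have pow_pred_le : q ^ (n - M - 1) ≤ Real.exp 1 * Real.exp (-y) := by
    refine (pow_le_exp_neg_mul_one_sub hq.1.le _).trans ?_
    rw [← Real.exp_add, Real.exp_le_exp, Nat.cast_sub (Nat.sub_pos_of_lt hMn), cast_sub, ← hy]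
    push_cast
    linarith [hq.1]
  rw [le_div_iff₀ (by simpa using hy_pos)]
  calc succProb n M q * (1 - Real.exp (-y))
    _ ≤ succProb n M q * (1 - q ^ n) := by
        gcongr
        exact mallowsProb_nonneg hq.1 _
    _ ≤ y * q ^ (n - M - 1) := hy ▸ succProb_mul_one_sub_pow_le hMn.le hq
    _ ≤ y * (Real.exp 1 * Real.exp (-y)) := by gcongr
    _ = Real.exp 1 * (y * Real.exp (-y)) := by ring

end SuccessProbability

section Asymptotics

lemma tendsto_exp_one_mul_div_one_sub_exp_neg :
    Tendsto (fun y : ℝ => Real.exp 1 * (y * Real.exp (-y)) / (1 - Real.exp (-y))) atTop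
      (nhds 0) := by
  have numerator : Tendsto (fun y : ℝ => y * Real.exp (-y)) atTop (nhds 0) := by
    simpa using Real.tendsto_pow_mul_exp_neg_atTop_nhds_zero 1
  have denominator := Real.tendsto_exp_neg_atTop_nhds_zero.const_sub 1
  simpa [Pi.div_def] using (numerator.const_mul (Real.exp 1)).div denominator (by norm_num)

theorem stmt_6_general {ι : Type*} {l : Filter ι} {n M : ι → ℕ} {q : ι → ℝ}
    (hq : ∀ᶠ i in l, q i ∈ Set.Ioo 0 1)
    (hlim : Tendsto (fun i => ((n i : ℝ) - M i) * (1 - q i)) l atTop) :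
    Tendsto (fun i => succProb (n i) (M i) (q i)) l (nhds 0) := by
  have bound_tendsto := tendsto_exp_one_mul_div_one_sub_exp_neg.comp hlim
  refine tendsto_of_tendsto_of_tendsto_of_le_of_le' tendsto_const_nhds bound_tendsto ?_ ?_
  · filter_upwards [hq] with i hqi using mallowsProb_nonneg hqi.1 _
  · filter_upwards [hq, hlim.eventually_gt_atTop 0] with i hqi hpos
    have hMn : (M i : ℝ) < n i := sub_pos.1 (pos_of_mul_pos_left hpos (sub_nonneg.2 hqi.2.le))
    exact succProb_le (Nat.cast_lt.1 hMn) hqi rfl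

lemma eventually_one_sub_div_rpow_mem_Ioo {c α : ℝ} (hc : 0 < c) (hα : 0 < α) :
    ∀ᶠ n : ℕ in atTop, 1 - c / (n : ℝ) ^ α ∈ Set.Ioo 0 1 := by
  have rpow_tendsto : Tendsto (fun n : ℕ => (n : ℝ) ^ α) atTop atTop :=
    (tendsto_rpow_atTop hα).comp tendsto_natCast_atTop_atTop
  filter_upwards [rpow_tendsto.eventually_gt_atTop c] with n hn
  have hpow : 0 < (n : ℝ) ^ α := hc.trans hn
  exact ⟨sub_pos.2 ((div_lt_one hpow).2 hn), sub_lt_self 1 (div_pos hc hpow)⟩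

end Asymptotics

theorem stmt_6 (c α : ℝ) (hc : 0 < c) (hα : α ∈ Set.Ioo (0 : ℝ) 1)
    (M : ℕ → ℕ) (hM : ∀ n, 1 ≤ n → M n ≤ n - 1)
    (hlim : Tendsto (fun n : ℕ => ((n : ℝ) - M n) / (n : ℝ) ^ α) atTop atTop) :
    Tendsto (fun n : ℕ => succProb n (M n) (1 - c / (n : ℝ) ^ α)) atTop (nhds 0) :=
  stmt_6_general (eventually_one_sub_div_rpow_mem_Ioo hc hα.1)
    ((hlim.const_mul_atTop hc).congr fun n => by ring)
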